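/- Let λ be a partition and n ≥ |λ| + λ_1. The restriction multiplicity of the irreducible S_n-module indexed by (n−|λ|,λ) in the irreducible polynomial GL_n-module indexed by a partition ν equals ⟨s_ν, s_{(n−|λ|,λ)}[1 + h_1 + h_2 + h_3 + ⋯]⟩, where [·] denotes plethysm of symmetric functions. -/

import Mathlib

open scoped BigOperators
noncomputable section

/-- The ring of symmetric functions, presented as `ℚ[p₁, p₂, p₃, …]`,
with the variable `X k` representing the power sum `p_k` (the variable `X 0` is unused). -/
abbrev SymFn := MvPolynomial ℕ ℚ

/-- The power sum symmetric function `p_k`. -/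
def pGen (k : ℕ) : SymFn := MvPolynomial.X k

/-- `p_λ` for a multiset of parts. -/
def pMul (m : Multiset ℕ) : SymFn := (m.map pGen).prod

/-- `p_λ` for a partition `λ`. -/
def pPart {n : ℕ} (lam : n.Partition) : SymFn := pMul lam.parts

/-- `z_λ = ∏_i i^{m_i(λ)} m_i(λ)!`. -/
def zed {n : ℕ} (lam : n.Partition) : ℚ :=
  ∏ i ∈ Finset.range (n + 1),
    (i : ℚ) ^ (lam.parts.count i) * (Nat.factorial (lam.parts.count i))

/-- `z` of a monomial in the `p`-generators. -/
def zMon (m : ℕ →₀ ℕ) : ℚ :=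
  ∏ i ∈ m.support, (i : ℚ) ^ (m i) * (Nat.factorial (m i))

/-- The Hall scalar product, determined by `⟨p_λ, p_μ⟩ = z_λ δ_{λμ}`. -/
def hall (f g : SymFn) : ℚ :=
  ∑ m ∈ f.support, MvPolynomial.coeff m f * MvPolynomial.coeff m g * zMon m

/-- The complete homogeneous symmetric function `h_m = ∑_{λ ⊢ m} p_λ / z_λ`. -/
def hFn (m : ℕ) : SymFn := ∑ lam : m.Partition, (zed lam)⁻¹ • pPart lam

/-- `h_k` for an integer index, vanishing for negative `k`. -/
def hInt (k : ℤ) : SymFn := if 0 ≤ k then hFn k.toNat else 0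

/-- The Schur function of a (finite, weakly decreasing) list of row lengths,
via the Jacobi–Trudi determinant `s_λ = det(h_{λ_i - i + j})`. -/
def schurList (l : List ℕ) : SymFn :=
  Matrix.det (Matrix.of fun i j : Fin l.length =>
    hInt ((l.get i : ℤ) - (i : ℤ) + (j : ℤ)))

/-- The parts of a partition, sorted in weakly decreasing order. -/
def partList {n : ℕ} (lam : n.Partition) : List ℕ := (lam.parts.sort (· ≤ ·)).reverse

/-- The Schur function `s_λ`. -/
def schur {n : ℕ} (lam : n.Partition) : SymFn := schurList (partList lam)

/-- Evaluation `f(Ξ_ν)` of a symmetric function at the eigenvalues of a permutation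
matrix of cycle type `ν`: the power sum `p_k` evaluates to `∑_{j ∈ ν, j ∣ k} j`. -/
def xiEval {n : ℕ} (nu : n.Partition) (f : SymFn) : ℚ :=
  MvPolynomial.eval (fun k => ((nu.parts.filter (fun j => j ∣ k)).sum : ℚ)) f

/-- The character scalar product `⟨f, g⟩_@ = ∑_{ν ⊢ n} f(Ξ_ν) g(Ξ_ν) / z_ν`. -/
def atProd (n : ℕ) (f g : SymFn) : ℚ :=
  ∑ nu : n.Partition, xiEval nu f * xiEval nu g / zed nu

/-- The Frobenius-type map `φ_n(f) = ∑_{ν ⊢ n} f(Ξ_ν) p_ν / z_ν`. -/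
def phi (n : ℕ) (f : SymFn) : SymFn :=
  ∑ nu : n.Partition, (xiEval nu f / zed nu) • pPart nu

/-- The Kronecker (internal) product, determined by
`(p_λ/z_λ) ∗ (p_μ/z_μ) = δ_{λμ} p_λ/z_λ`. -/
def kron (f g : SymFn) : SymFn :=
  ∑ m ∈ f.support,
    MvPolynomial.monomial m (MvPolynomial.coeff m f * MvPolynomial.coeff m g * zMon m)

end


/-- The plethysm `p_k[g]`: substitute `p_j ↦ p_{jk}` in `g`. -/
noncomputable def plethP (k : ℕ) (g : SymFn) : SymFn :=
  MvPolynomial.eval₂ MvPolynomial.C (fun j => MvPolynomial.X (j * k)) g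

/-- The plethysm `f[g]` of symmetric functions. -/
noncomputable def pleth (f g : SymFn) : SymFn :=
  MvPolynomial.eval₂ MvPolynomial.C (fun k => plethP k g) f

/-!
Let `h = ∑ hᵢ`, and call `G` a kernel of the evaluation `p_k ↦ a k` if `⟨f, G⟩` is the value of `f`
under that evaluation. Multiplication by `p_k` is adjoint to `k ∂/∂p_k` for the Hall product, so the
Leibniz rule expands `⟨p_s, F * G⟩` over the ways of splitting `s` into two parts. Hence a product
of kernels is a kernel of the sum of their evaluations, as when alphabets are joined. The series `h`
is the kernel of `p_k ↦ 1`, and `p_j[h]` that of the evaluation at the `j`-th roots of unity, which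
takes `p_k` to `j` if `j ∣ k` and to `0` otherwise. Therefore `p_μ[h]` is the kernel of
`f ↦ f(Ξ_μ)`, and expanding `g = ∑ ⟨g, p_μ⟩ p_μ / z_μ` gives
`⟨f, g[h]⟩ = ∑ ⟨g, p_μ⟩ f(Ξ_μ) / z_μ`.
-/

open MvPolynomial

section PowerSums

lemma pMul_zero : pMul 0 = 1 := by
  simp [pMul]

lemma pMul_cons (k : ℕ) (s : Multiset ℕ) : pMul (k ::ₘ s) = pGen k * pMul s := by
  simp [pMul]

lemma pMul_add (s t : Multiset ℕ) : pMul (s + t) = pMul s * pMul t := by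
  simp [pMul]

lemma pMul_eq_monomial (s : Multiset ℕ) : pMul s = monomial (Multiset.toFinsupp s) 1 := by
  induction s using Multiset.induction with
  | empty => simp [pMul_zero]
  | cons k s ih =>
    rw [pMul_cons, ih, ← Multiset.singleton_add, map_add, Multiset.toFinsupp_singleton, pGen, X,
      monomial_mul, one_mul]

lemma zMon_eq_prod (m : ℕ →₀ ℕ) :
    zMon m = m.prod fun i e => (i : ℚ) ^ e * (Nat.factorial e : ℚ) :=
  rfl

lemma zMon_add_single (m : ℕ →₀ ℕ) (k : ℕ) :
    zMon (m + Finsupp.single k 1) = k * (m k + 1) * zMon m := by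
  simp only [zMon_eq_prod]
  rw [← Finsupp.mul_prod_erase' (m + Finsupp.single k 1) k _ (by simp),
    ← Finsupp.mul_prod_erase' m k _ (by simp), Finsupp.erase_add, Finsupp.erase_single, add_zero,
    Finsupp.add_apply, Finsupp.single_eq_same, Nat.factorial_succ, pow_succ]
  push_cast
  ring

lemma zed_eq_zMon {n : ℕ} (lam : n.Partition) :
    zed lam = zMon (Multiset.toFinsupp lam.parts) := by
  rw [zMon_eq_prod, Finsupp.prod_of_support_subset (s := Finset.range (n + 1)) _ _ _ (by simp)]
  · simp only [zed, Multiset.toFinsupp_apply]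
  · intro i hi
    have hi_mem : i ∈ lam.parts := by simpa using hi
    exact Finset.mem_range_succ_iff.mpr (Nat.Partition.le_of_mem_parts hi_mem)

lemma zed_ne_zero {n : ℕ} (lam : n.Partition) : zed lam ≠ 0 := by
  refine Finset.prod_ne_zero_iff.mpr fun i _ =>
    mul_ne_zero ?_ (Nat.cast_ne_zero.mpr (Nat.factorial_ne_zero _))
  rcases eq_or_ne i 0 with rfl | hi
  · have h0 : 0 ∉ lam.parts := fun h => (lam.parts_pos h).ne' rfl
    simp [Multiset.count_eq_zero_of_notMem h0]
  · exact pow_ne_zero _ (Nat.cast_ne_zero.mpr hi)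

end PowerSums

section HallForm

/-- The Hall scalar product `hall` as a bilinear form, so that `map_sum` and its relatives apply in
either argument. -/
noncomputable def hallForm : SymFn →ₗ[ℚ] SymFn →ₗ[ℚ] ℚ :=
  (basisMonomials ℕ ℚ).constr ℚ fun m => zMon m • lcoeff ℚ m

lemma hallForm_apply (f g : SymFn) : hallForm f g = hall f g := by
  rw [hallForm, Module.Basis.constr_apply, Finsupp.sum, LinearMap.sum_apply]
  refine Finset.sum_congr rfl fun m _ => ?_
  change coeff m f * (zMon m * coeff m g) = coeff m f * coeff m g * zMon m
  ring

lemma hallForm_monomial (m : ℕ →₀ ℕ) (c : ℚ) (g : SymFn) :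
    hallForm (monomial m c) g = c * (zMon m * coeff m g) := by
  have hc : monomial m c = c • basisMonomials ℕ ℚ m := by simp [smul_monomial]
  rw [hc, map_smul, hallForm, Module.Basis.constr_basis]
  rfl

lemma hallForm_one_left (g : SymFn) : hallForm 1 g = constantCoeff g := by
  rw [← C_1, C_apply, hallForm_monomial]
  simp [zMon, constantCoeff_eq]

lemma hallForm_pMul_pMul (s t : Multiset ℕ) :
    hallForm (pMul s) (pMul t) = if s = t then zMon (Multiset.toFinsupp s) else 0 := by
  simp [pMul_eq_monomial, hallForm_monomial, coeff_monomial, eq_comm]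

lemma hallForm_pPart_pPart {n : ℕ} (lam mu : n.Partition) :
    hallForm (pPart lam) (pPart mu) = if lam = mu then zed lam else 0 := by
  simp only [pPart, hallForm_pMul_pMul, zed_eq_zMon, Nat.Partition.ext_iff]

lemma hallForm_pGen_mul (k : ℕ) (f g : SymFn) :
    hallForm (pGen k * f) g = k * hallForm f (pderiv k g) := by
  induction f using MvPolynomial.induction_on' with
  | monomial m c =>
    rw [pGen, X, monomial_mul, one_mul, add_comm, hallForm_monomial, hallForm_monomial,
      zMon_add_single, coeff_pderiv]
    ring
  | add f₁ f₂ h₁ h₂ =>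
    simp only [mul_add, map_add, LinearMap.add_apply, h₁, h₂]

lemma hallForm_pMul_cons (k : ℕ) (s : Multiset ℕ) (g : SymFn) :
    hallForm (pMul (k ::ₘ s)) g = k * hallForm (pMul s) (pderiv k g) := by
  rw [pMul_cons, hallForm_pGen_mul]

lemma hallForm_pMul_mul (s : Multiset ℕ) (F G : SymFn) :
    hallForm (pMul s) (F * G)
      = (s.antidiagonal.map fun t => hallForm (pMul t.1) F * hallForm (pMul t.2) G).sum := by
  induction s using Multiset.induction generalizing F G with
  | empty => simp [pMul_zero, hallForm_one_left]
  | cons k s ih =>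
    rw [hallForm_pMul_cons, pderiv_mul, map_add, ih, ih, Multiset.antidiagonal_cons,
      Multiset.map_add, Multiset.sum_add, mul_add, add_comm]
    simp only [Multiset.map_map, Function.comp_def, Prod.map, id, hallForm_pMul_cons,
      ← Multiset.sum_map_mul_left]
    congr 3 <;> funext t <;> ring

lemma hallForm_pMul_hFn {s : Multiset ℕ} (hs : ∀ k ∈ s, 0 < k) (n : ℕ) :
    hallForm (pMul s) (hFn n) = if s.sum = n then 1 else 0 := by
  rw [hFn, map_sum]
  split_ifs with hn
  · obtain ⟨lam, rfl⟩ : ∃ lam : n.Partition, lam.parts = s := ⟨⟨s, hs _, hn⟩, rfl⟩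
    rw [← pPart, Finset.sum_eq_single lam]
    · rw [map_smul, hallForm_pPart_pPart, if_pos rfl, smul_eq_mul,
        inv_mul_cancel₀ (zed_ne_zero lam)]
    · intro mu _ hne
      rw [map_smul, hallForm_pPart_pPart, if_neg hne.symm, smul_zero]
    · simp
  · refine Finset.sum_eq_zero fun lam _ => ?_
    have hne : s ≠ lam.parts := fun h => hn (h ▸ lam.parts_sum)
    rw [map_smul, pPart, hallForm_pMul_pMul, if_neg hne, smul_zero]

end HallForm

section Plethysm

lemma plethP_eq_rename (j : ℕ) (g : SymFn) : plethP j g = rename (· * j) g := by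
  have h : aeval (fun i => X (i * j)) = rename (R := ℚ) (· * j) := algHom_ext fun i => by simp
  exact DFunLike.congr_fun h g

lemma pleth_eq_aeval (f g : SymFn) : pleth f g = aeval (fun k => plethP k g) f :=
  rfl

lemma pleth_pMul (s : Multiset ℕ) (g : SymFn) :
    pleth (pMul s) g = (s.map fun k => plethP k g).prod := by
  simp [pleth_eq_aeval, pMul, pGen, map_multiset_prod, Function.comp_def]

lemma hallForm_pMul_map_mul_plethP {j : ℕ} (hj : j ≠ 0) (s : Multiset ℕ) (g : SymFn) :
    hallForm (pMul (s.map (· * j))) (plethP j g) = j ^ s.card * hallForm (pMul s) g := by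
  induction s using Multiset.induction generalizing g with
  | empty => simp [pMul_zero, hallForm_one_left, plethP_eq_rename, constantCoeff_rename]
  | cons k s ih =>
    rw [Multiset.map_cons, hallForm_pMul_cons, plethP_eq_rename,
      pderiv_rename (mul_left_injective₀ hj), ← plethP_eq_rename, ih, hallForm_pMul_cons,
      Multiset.card_cons]
    push_cast
    ring

lemma hallForm_pMul_plethP_eq_zero {j k : ℕ} {s : Multiset ℕ} (hk : k ∈ s) (hjk : ¬ j ∣ k)
    (g : SymFn) : hallForm (pMul s) (plethP j g) = 0 := by
  obtain ⟨t, rfl⟩ := Multiset.exists_cons_of_mem hk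
  have hvars : k ∉ (rename (· * j) g).vars := fun h => by
    obtain ⟨i, -, rfl⟩ := Finset.mem_image.mp (vars_rename _ _ h)
    exact hjk (dvd_mul_left j i)
  rw [hallForm_pMul_cons, plethP_eq_rename, pderiv_eq_zero_of_notMem_vars hvars, map_zero, mul_zero]

end Plethysm

lemma sum_map_filter_eq_sum_map_ite {ι M : Type*} [AddCommMonoid M] (p : ι → Prop)
    [DecidablePred p] (f : ι → M) (s : Multiset ι) :
    ((s.filter p).map f).sum = (s.map fun i => if p i then f i else 0).sum := by
  induction s using Multiset.induction with
  | empty => simp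
  | cons i s ih => by_cases hi : p i <;> simp [hi, ih]

/-- `G` represents the evaluation `p_k ↦ a k` for the Hall scalar product, in degrees up to `N`.
Parts equal to `0` are excluded because `X 0` is not a symmetric function. -/
def IsHallKernel (N : ℕ) (a : ℕ → ℚ) (G : SymFn) : Prop :=
  ∀ s : Multiset ℕ, (∀ k ∈ s, 0 < k) → s.sum ≤ N → hallForm (pMul s) G = (s.map a).prod

namespace IsHallKernel

variable {N : ℕ} {a b : ℕ → ℚ} {F G : SymFn}

lemma one (N : ℕ) : IsHallKernel N 0 1 := by
  intro s _ _
  rw [← pMul_zero, hallForm_pMul_pMul]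
  rcases eq_or_ne s 0 with rfl | hs
  · simp [zMon]
  · simp [hs]

lemma mul (hF : IsHallKernel N a F) (hG : IsHallKernel N b G) :
    IsHallKernel N (a + b) (F * G) := by
  intro s hpos hsum
  simp only [Pi.add_apply, hallForm_pMul_mul, Multiset.prod_map_add]
  refine congrArg Multiset.sum (Multiset.map_congr rfl fun t ht => ?_)
  obtain rfl : t.1 + t.2 = s := Multiset.mem_antidiagonal.mp ht
  rw [Multiset.sum_add] at hsum
  rw [hF t.1 (fun k hk => hpos k (Multiset.mem_add.mpr (.inl hk))) (by lia),
    hG t.2 (fun k hk => hpos k (Multiset.mem_add.mpr (.inr hk))) (by lia)]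

lemma multisetProd {ι : Type*} (s : Multiset ι) {a : ι → ℕ → ℚ} {G : ι → SymFn}
    (h : ∀ i ∈ s, IsHallKernel N (a i) (G i)) :
    IsHallKernel N (s.map a).sum (s.map G).prod := by
  induction s using Multiset.induction with
  | empty => simpa using one N
  | cons i s ih =>
    rw [Multiset.map_cons, Multiset.map_cons, Multiset.sum_cons, Multiset.prod_cons]
    exact (h i (Multiset.mem_cons_self i s)).mul
      (ih fun k hk => h k (Multiset.mem_cons_of_mem hk))

lemma sum_hFn (N : ℕ) : IsHallKernel N 1 (∑ i ∈ Finset.range (N + 1), hFn i) := by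
  intro s hpos hsum
  simp [map_sum, hallForm_pMul_hFn hpos, hsum]

lemma plethP {j : ℕ} (hj : j ≠ 0) (hG : IsHallKernel N 1 G) :
    IsHallKernel N (fun k => if j ∣ k then (j : ℚ) else 0) (plethP j G) := by
  intro s hpos hsum
  by_cases hdvd : ∀ k ∈ s, j ∣ k
  · obtain ⟨t, rfl⟩ : ∃ t : Multiset ℕ, t.map (· * j) = s :=
      ⟨s.map (· / j), by simp +contextual [Multiset.map_map, Nat.div_mul_cancel, hdvd]⟩
    rw [hallForm_pMul_map_mul_plethP hj, hG t]
    · simp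
    · exact fun k hk => Nat.pos_of_mul_pos_right (hpos _ (Multiset.mem_map_of_mem _ hk))
    · rw [Multiset.sum_map_mul_right, Multiset.map_id'] at hsum
      exact (Nat.le_mul_of_pos_right _ (Nat.pos_of_ne_zero hj)).trans hsum
  · push Not at hdvd
    obtain ⟨k, hk, hjk⟩ := hdvd
    rw [hallForm_pMul_plethP_eq_zero hk hjk, eq_comm]
    exact Multiset.prod_eq_zero (Multiset.mem_map.mpr ⟨k, hk, if_neg hjk⟩)

lemma pleth_pPart {n : ℕ} (hG : IsHallKernel N 1 G) (mu : n.Partition) :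
    IsHallKernel N (fun k => ((mu.parts.filter (· ∣ k)).sum : ℚ)) (pleth (pPart mu) G) := by
  rw [pPart, pleth_pMul]
  convert multisetProd mu.parts fun j hj => hG.plethP (mu.parts_pos hj).ne' using 1
  funext k
  simp [Pi.multiset_sum_apply, Nat.cast_multiset_sum, sum_map_filter_eq_sum_map_ite]

end IsHallKernel

section Grading

/-- The homogeneous symmetric functions of degree `n`, spanned by the `p_λ` with `λ ⊢ n`. -/
noncomputable def powerSumSpan (n : ℕ) : Submodule ℚ SymFn :=
  Submodule.span ℚ (Set.range (pPart : n.Partition → SymFn))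

lemma pPart_mem_powerSumSpan {n : ℕ} (lam : n.Partition) : pPart lam ∈ powerSumSpan n :=
  Submodule.subset_span ⟨lam, rfl⟩

instance powerSumSpan.gradedMonoid : SetLike.GradedMonoid powerSumSpan where
  one_mem := by simpa [pPart, pMul_zero] using pPart_mem_powerSumSpan (default : Nat.Partition 0)
  mul_mem m n f g hf hg := by
    have hmul := Submodule.mul_mem_mul hf hg
    rw [powerSumSpan, powerSumSpan, Submodule.span_mul_span] at hmul
    refine Submodule.span_mono ?_ hmul
    rintro _ ⟨_, ⟨lam, rfl⟩, _, ⟨mu, rfl⟩, rfl⟩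
    refine ⟨⟨lam.parts + mu.parts, fun hi => ?_, ?_⟩, pMul_add _ _⟩
    · exact (Multiset.mem_add.mp hi).elim lam.parts_pos mu.parts_pos
    · rw [Multiset.sum_add, lam.parts_sum, mu.parts_sum]

lemma hFn_mem_powerSumSpan (n : ℕ) : hFn n ∈ powerSumSpan n :=
  Submodule.sum_mem _ fun lam _ => Submodule.smul_mem _ _ (pPart_mem_powerSumSpan lam)

lemma prod_hInt_mem_powerSumSpan {ι : Type*} (t : Finset ι) (d : ι → ℤ) {n : ℕ}
    (hd : ∑ i ∈ t, d i = n) : ∏ i ∈ t, hInt (d i) ∈ powerSumSpan n := by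
  by_cases hnonneg : ∀ i ∈ t, 0 ≤ d i
  · have hn : ∑ i ∈ t, (d i).toNat = n := by
      zify
      rw [← hd]
      exact Finset.sum_congr rfl fun i hi => Int.toNat_of_nonneg (hnonneg i hi)
    rw [← hn]
    refine SetLike.prod_mem_graded _ _ _ fun i hi => ?_
    rw [hInt, if_pos (hnonneg i hi)]
    exact hFn_mem_powerSumSpan _
  · push Not at hnonneg
    obtain ⟨i, hi, hneg⟩ := hnonneg
    rw [Finset.prod_eq_zero hi (if_neg hneg.not_ge)]
    exact Submodule.zero_mem _

lemma schurList_mem_powerSumSpan (l : List ℕ) : schurList l ∈ powerSumSpan l.sum := by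
  rw [schurList, Matrix.det_apply]
  refine Submodule.sum_mem _ fun σ _ => ?_
  rw [Units.smul_def]
  refine zsmul_mem (prod_hInt_mem_powerSumSpan _ _ ?_) _
  rw [Finset.sum_add_distrib, Finset.sum_sub_distrib,
    Equiv.sum_comp σ fun i => (l.get i : ℤ), Equiv.sum_comp σ fun i => ((i : ℕ) : ℤ),
    sub_add_cancel, ← Nat.cast_sum]
  simp [Fin.sum_univ_getElem]

lemma sum_partList {n : ℕ} (lam : n.Partition) : (partList lam).sum = n := by
  rw [partList, List.sum_reverse, ← Multiset.sum_coe, Multiset.sort_eq, lam.parts_sum]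

lemma schur_mem_powerSumSpan {n : ℕ} (lam : n.Partition) : schur lam ∈ powerSumSpan n := by
  simpa only [schur, sum_partList] using schurList_mem_powerSumSpan (partList lam)

lemma schurList_cons_partList_mem_powerSumSpan {k n : ℕ} (lam : k.Partition) (hk : k ≤ n) :
    schurList ((n - k) :: partList lam) ∈ powerSumSpan n := by
  simpa only [List.sum_cons, sum_partList, Nat.sub_add_cancel hk] using
    schurList_mem_powerSumSpan ((n - k) :: partList lam)

lemma eq_sum_hallForm_smul_pPart {n : ℕ} {g : SymFn} (hg : g ∈ powerSumSpan n) :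
    g = ∑ mu : n.Partition, (hallForm g (pPart mu) / zed mu) • pPart mu := by
  obtain ⟨c, rfl⟩ := (Submodule.mem_span_range_iff_exists_fun ℚ).mp hg
  refine Finset.sum_congr rfl fun mu _ => ?_
  simp [map_sum, hallForm_pPart_pPart, zed_ne_zero]

end Grading

lemma IsHallKernel.hallForm_eq_eval {N p : ℕ} {a : ℕ → ℚ} {f G : SymFn} (hG : IsHallKernel N a G)
    (hp : p ≤ N) (hf : f ∈ powerSumSpan p) : hallForm f G = eval a f := by
  induction hf using Submodule.span_induction with
  | mem f hf =>
    obtain ⟨lam, rfl⟩ := hf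
    rw [pPart, hG lam.parts (fun _ => lam.parts_pos) (lam.parts_sum.le.trans hp)]
    simp [pMul, pGen, map_multiset_prod, Function.comp_def]
  | zero => simp
  | add f g _ _ hf hg => rw [map_add, map_add, LinearMap.add_apply, hf, hg]
  | smul c f _ hf => rw [map_smul, LinearMap.smul_apply, hf, smul_eval, smul_eq_mul]

lemma hallForm_pleth_pPart {n N p : ℕ} (hp : p ≤ N) {f : SymFn} (hf : f ∈ powerSumSpan p)
    (mu : n.Partition) :
    hallForm f (pleth (pPart mu) (∑ i ∈ Finset.range (N + 1), hFn i)) = xiEval mu f := by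
  rw [((IsHallKernel.sum_hFn N).pleth_pPart mu).hallForm_eq_eval hp hf]
  simp [xiEval]

theorem restriction_multiplicity_plethysm_general {n N p : ℕ} (hp : p ≤ N) {f g : SymFn}
    (hf : f ∈ powerSumSpan p) (hg : g ∈ powerSumSpan n) :
    (∑ mu : n.Partition, xiEval mu f * hall g (pMul mu.parts) / zed mu)
      = hall f (pleth g (∑ i ∈ Finset.range (N + 1), hFn i)) := by
  set H := ∑ i ∈ Finset.range (N + 1), hFn i
  have hpleth : pleth g H
      = ∑ mu : n.Partition, (hallForm g (pPart mu) / zed mu) • pleth (pPart mu) H := by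
    simp only [pleth_eq_aeval, ← map_smul, ← map_sum, ← eq_sum_hallForm_smul_pPart hg]
  rw [← hallForm_apply, hpleth, map_sum]
  refine Finset.sum_congr rfl fun mu _ => ?_
  rw [map_smul, hallForm_pleth_pPart hp hf, ← hallForm_apply, ← pPart, smul_eq_mul]
  ring

/-- the multiplicity of the irreducible `S_n`-module indexed by
`(n−|λ|,λ)` in the restriction of the irreducible polynomial `GL_n`-module indexed
by `ν` — i.e. the character inner product
`∑_{μ ⊢ n} s_ν(Ξ_μ) χ^{(n−|λ|,λ)}(μ) / z_μ` — equals
`⟨s_ν, s_{(n−|λ|,λ)}[1 + h_1 + h_2 + ⋯]⟩`, where the plethysm is truncated at any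
degree `N ≥ |ν|` (higher terms do not pair with `s_ν`). -/
theorem restriction_multiplicity_plethysm (k n N p : ℕ) (lam : Nat.Partition k)
    (nuP : Nat.Partition p) (hn : k + (partList lam).getD 0 0 ≤ n) (hN : p ≤ N) :
    (∑ mu : Nat.Partition n,
        xiEval mu (schur nuP)
          * hall (schurList ((n - k) :: partList lam)) (pMul mu.parts) / zed mu)
      = hall (schur nuP)
          (pleth (schurList ((n - k) :: partList lam))
            (∑ i ∈ Finset.range (N + 1), hFn i)) :=
  restriction_multiplicity_plethysm_general hN (schur_mem_powerSumSpan nuP)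
    (schurList_cons_partList_mem_powerSumSpan lam (le_of_add_le_left hn))
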